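/- Let U : B₁ ⊗ Q₁ → F ⊗ Q₂ be unitary and let τ be the pure state on S ⊗ B̄₁ ⊗ F ⊗ Q₂ obtained by applying (id_S ⊗ U ⊗ id_{B̄₁}) to |ψ⟩_{S Q₁} ⊗ |φ⁺⟩_{B₁ B̄₁}, where |ψ⟩ is any pure state on S ⊗ Q₁ and |φ⁺⟩ is the maximally entangled state on B₁ ⊗ B̄₁. Then H(S B̄₁ F)_τ − H(S)_τ ≥ log₂(dim(B₁)/dim(F)), where H denotes the von Neumann entropy of the corresponding reduced state of τ. -/

import Mathlib

open Matrix
open scoped ComplexOrder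

/-- Matrix base-2 logarithm of a Hermitian matrix, via spectral decomposition
(junk value `0` on non-Hermitian input). -/
noncomputable def mlog2 {n : Type*} [Fintype n] [DecidableEq n]
    (A : Matrix n n ℂ) : Matrix n n ℂ :=
  if hA : A.IsHermitian then
    (hA.eigenvectorUnitary : Matrix n n ℂ) *
      Matrix.diagonal (fun i => (Real.logb 2 (hA.eigenvalues i) : ℂ)) *
      star (hA.eigenvectorUnitary : Matrix n n ℂ)
  else 0

/-- Von Neumann entropy (base 2): `H(ρ) = -Tr[ρ log₂ ρ]`. -/
noncomputable def vnEntropy {n : Type*} [Fintype n] [DecidableEq n]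
    (ρ : Matrix n n ℂ) : ℝ :=
  -(ρ * mlog2 ρ).trace.re

open Real in
/-- For a column-stochastic matrix `T` all of whose rows sum to `c`, the Shannon entropy of `T p`
exceeds that of `p` by at least `-log c`. -/
lemma sum_negMulLog_sub_log_le {m n : Type*} [Fintype m] [Fintype n] (T : m → n → ℝ) {c : ℝ}
    (hc : 0 < c) (hT : ∀ j i, 0 ≤ T j i) (hcol : ∀ i, ∑ j, T j i = 1)
    (hrow : ∀ j, ∑ i, T j i = c) (p : n → ℝ) (hp : ∀ i, 0 ≤ p i) (hp1 : ∑ i, p i = 1) :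
    ∑ i, negMulLog (p i) - log c ≤ ∑ j, negMulLog (∑ i, T j i * p i) := by
  have key (j : m) : ∑ i, T j i * negMulLog (p i) - (∑ i, T j i * p i) * log c ≤
      negMulLog (∑ i, T j i * p i) := by
    have hJ := concaveOn_negMulLog.le_map_sum (t := Finset.univ) (w := fun i => c⁻¹ * T j i)
      (p := p) (fun i _ => mul_nonneg (inv_nonneg.2 hc.le) (hT j i))
      (by rw [← Finset.mul_sum, hrow, inv_mul_cancel₀ hc.ne']) (fun i _ => hp i)
    simp only [smul_eq_mul, mul_assoc, ← Finset.mul_sum] at hJ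
    have hsplit := negMulLog_mul c (c⁻¹ * ∑ i, T j i * p i)
    rw [mul_inv_cancel_left₀ hc.ne'] at hsplit
    have hlog : c⁻¹ * (∑ i, T j i * p i) * negMulLog c = -((∑ i, T j i * p i) * log c) := by
      rw [negMulLog]
      field_simp
    have hmul := mul_le_mul_of_nonneg_left hJ hc.le
    rw [mul_inv_cancel_left₀ hc.ne'] at hmul
    linarith
  have hswap (g : n → ℝ) : ∑ j, ∑ i, T j i * g i = ∑ i, g i := by
    rw [Finset.sum_comm]
    simp [← Finset.sum_mul, hcol]
  calc ∑ i, negMulLog (p i) - log c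
      = ∑ j, (∑ i, T j i * negMulLog (p i) - (∑ i, T j i * p i) * log c) := by
        rw [Finset.sum_sub_distrib, ← Finset.sum_mul, hswap, hswap, hp1, one_mul]
    _ ≤ _ := Finset.sum_le_sum fun j _ => key j

lemma Matrix.IsHermitian.eq_eigenvectorUnitary_mul_diagonal_mul {n : Type*} [Fintype n]
    [DecidableEq n] {A : Matrix n n ℂ} (hA : A.IsHermitian) :
    A = (hA.eigenvectorUnitary : Matrix n n ℂ) * diagonal (fun i => (hA.eigenvalues i : ℂ)) *
      (hA.eigenvectorUnitary : Matrix n n ℂ)ᴴ :=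
  hA.spectral_theorem

lemma Matrix.IsHermitian.eigenvectorUnitary_conjTranspose_mul_self {n : Type*} [Fintype n]
    [DecidableEq n] {A : Matrix n n ℂ} (hA : A.IsHermitian) :
    (hA.eigenvectorUnitary : Matrix n n ℂ)ᴴ * (hA.eigenvectorUnitary : Matrix n n ℂ) = 1 :=
  Unitary.coe_star_mul_self _

lemma Matrix.IsHermitian.eigenvectorUnitary_mul_conjTranspose_self {n : Type*} [Fintype n]
    [DecidableEq n] {A : Matrix n n ℂ} (hA : A.IsHermitian) :
    (hA.eigenvectorUnitary : Matrix n n ℂ) * (hA.eigenvectorUnitary : Matrix n n ℂ)ᴴ = 1 :=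
  Unitary.coe_mul_star_self _

lemma vnEntropy_eq_sum_negMulLog {n : Type*} [Fintype n] [DecidableEq n] {A : Matrix n n ℂ}
    (hA : A.IsHermitian) :
    vnEntropy A = (∑ i, Real.negMulLog (hA.eigenvalues i)) / Real.log 2 := by
  have h : (A * mlog2 A).trace =
      ∑ i, ((hA.eigenvalues i * Real.logb 2 (hA.eigenvalues i) : ℝ) : ℂ) := by
    rw [mlog2, dif_pos hA]
    conv_lhs => enter [1, 1]; rw [hA.eq_eigenvectorUnitary_mul_diagonal_mul]
    rw [star_eq_conjTranspose, Matrix.trace_mul_comm]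
    simp only [Matrix.mul_assoc]
    rw [Matrix.trace_mul_comm]
    simp only [Matrix.mul_assoc]
    rw [hA.eigenvectorUnitary_conjTranspose_mul_self, Matrix.mul_one,
      ← Matrix.mul_assoc _ _ (diagonal _), hA.eigenvectorUnitary_conjTranspose_mul_self,
      Matrix.one_mul, diagonal_mul_diagonal, trace_diagonal]
    exact Finset.sum_congr rfl fun i _ => by push_cast; ring
  rw [vnEntropy, h, ← Complex.ofReal_sum, Complex.ofReal_re, Finset.sum_div,
    ← Finset.sum_neg_distrib]
  exact Finset.sum_congr rfl fun i _ => by rw [Real.negMulLog, Real.logb]; ring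

open Polynomial in
/-- `A * B` and `B * A` have the same nonzero spectrum, hence the same entropy. -/
lemma vnEntropy_mul_comm {m n : Type*} [Fintype m] [DecidableEq m] [Fintype n] [DecidableEq n]
    (A : Matrix m n ℂ) (B : Matrix n m ℂ) (hAB : (A * B).IsHermitian)
    (hBA : (B * A).IsHermitian) : vnEntropy (A * B) = vnEntropy (B * A) := by
  have h := congrArg (fun P : ℂ[X] => (P.roots.map fun z => Real.negMulLog z.re).sum)
    (charpoly_mul_comm' A B)
  have hX (k : ℕ) : (X ^ k : ℂ[X]) ≠ 0 := pow_ne_zero _ X_ne_zero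
  simp only [roots_mul (mul_ne_zero (hX _) (charpoly_monic _).ne_zero), roots_X_pow,
    hAB.roots_charpoly_eq_eigenvalues, hBA.roots_charpoly_eq_eigenvalues, Multiset.map_add,
    Multiset.sum_add, Multiset.map_nsmul, Multiset.map_singleton, Multiset.sum_nsmul,
    Multiset.map_map, Complex.zero_re, Real.negMulLog_zero, Multiset.sum_singleton,
    smul_zero, zero_add] at h
  rw [vnEntropy_eq_sum_negMulLog hAB, vnEntropy_eq_sum_negMulLog hBA]
  congr 1

lemma sum_mul_diagonal_mul_conjTranspose_apply {κ m n : Type*} [Fintype κ] [Fintype n]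
    [DecidableEq n] (W : κ → Matrix m n ℂ) (d : n → ℝ) (j : m) :
    (∑ k, W k * diagonal (fun i => (d i : ℂ)) * (W k)ᴴ) j j =
      ((∑ i, (∑ k, Complex.normSq (W k j i)) * d i : ℝ) : ℂ) := by
  push_cast
  simp only [Matrix.sum_apply, Matrix.mul_apply (M := _ * diagonal _), mul_diagonal,
    conjTranspose_apply,
    Finset.sum_mul, RCLike.star_def, ← Complex.mul_conj]
  rw [Finset.sum_comm]
  exact Finset.sum_congr rfl fun i _ => Finset.sum_congr rfl fun k _ => by ring

/-- Entropy gain of a quantum channel with Kraus operators `L k` mapping `1` to `c • 1`. -/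
lemma vnEntropy_sub_logb_le_of_kraus {κ m n : Type*} [Fintype κ] [Fintype m] [DecidableEq m]
    [Fintype n] [DecidableEq n] (L : κ → Matrix m n ℂ) {c : ℝ} (hc : 0 < c)
    (htp : ∑ k, (L k)ᴴ * L k = 1) (hunital : ∑ k, L k * (L k)ᴴ = (c : ℂ) • 1)
    {ρ : Matrix n n ℂ} (hρ : ρ.PosSemidef) (htr : ρ.trace = 1) :
    vnEntropy ρ - Real.logb 2 c ≤ vnEntropy (∑ k, L k * ρ * (L k)ᴴ) := by
  have hσ : (∑ k, L k * ρ * (L k)ᴴ).IsHermitian :=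
    (Matrix.posSemidef_sum _ fun k _ => hρ.mul_mul_conjTranspose_same (L k)).isHermitian
  set E : Matrix n n ℂ := ↑hρ.isHermitian.eigenvectorUnitary
  set G : Matrix m m ℂ := ↑hσ.eigenvectorUnitary with hG
  have hEE : E * Eᴴ = 1 := hρ.isHermitian.eigenvectorUnitary_mul_conjTranspose_self
  have hEE' : Eᴴ * E = 1 := hρ.isHermitian.eigenvectorUnitary_conjTranspose_mul_self
  have hGG : G * Gᴴ = 1 := hσ.eigenvectorUnitary_mul_conjTranspose_self
  have hGG' : Gᴴ * G = 1 := hσ.eigenvectorUnitary_conjTranspose_mul_self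
  let W : κ → Matrix m n ℂ := fun k => Gᴴ * L k * E
  have hconj (X : Matrix n n ℂ) :
      ∑ k, W k * X * (W k)ᴴ = Gᴴ * (∑ k, L k * (E * X * Eᴴ) * (L k)ᴴ) * G := by
    simp [W, Matrix.mul_sum, Matrix.sum_mul, Matrix.mul_assoc]
  have hWtp : ∑ k, (W k)ᴴ * W k = 1 := by
    have h (k : κ) : (W k)ᴴ * W k = Eᴴ * ((L k)ᴴ * L k) * E := by
      calc (W k)ᴴ * W k = Eᴴ * (L k)ᴴ * (G * Gᴴ) * L k * E := by simp [W, Matrix.mul_assoc]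
        _ = _ := by simp [hGG, Matrix.mul_assoc]
    simp only [h, ← Matrix.sum_mul, ← Matrix.mul_sum, htp, Matrix.mul_one, hEE']
  have hWunital : ∑ k, W k * (1 : Matrix n n ℂ) * (W k)ᴴ = (c : ℂ) • 1 := by
    rw [hconj]
    simp [hEE, hunital, hGG']
  have hWdiag : ∑ k, W k * diagonal (fun i => (hρ.isHermitian.eigenvalues i : ℂ)) * (W k)ᴴ =
      diagonal (fun i => (hσ.eigenvalues i : ℂ)) := by
    rw [hconj, ← hρ.isHermitian.eq_eigenvectorUnitary_mul_diagonal_mul]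
    conv_lhs => enter [1, 2]; rw [hσ.eq_eigenvectorUnitary_mul_diagonal_mul]
    rw [← hG]
    simp only [Matrix.mul_assoc, hGG', Matrix.mul_one]
    rw [← Matrix.mul_assoc, hGG', Matrix.one_mul]
  have hr (j : m) : hσ.eigenvalues j =
      ∑ i, (∑ k, Complex.normSq (W k j i)) * hρ.isHermitian.eigenvalues i := by
    have h := sum_mul_diagonal_mul_conjTranspose_apply W hρ.isHermitian.eigenvalues j
    rw [hWdiag, diagonal_apply_eq] at h
    exact_mod_cast h
  have hmain := sum_negMulLog_sub_log_le (fun j i => ∑ k, Complex.normSq (W k j i)) hc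
    (fun j i => Finset.sum_nonneg fun k _ => Complex.normSq_nonneg _)
    (fun i => by
      have h := sum_mul_diagonal_mul_conjTranspose_apply (fun k => (W k)ᴴ) (fun _ => 1) i
      simp only [Complex.ofReal_one, diagonal_one, Matrix.mul_one, conjTranspose_conjTranspose,
        hWtp, one_apply_eq, mul_one, conjTranspose_apply, RCLike.star_def, Complex.normSq_conj] at h
      exact_mod_cast h.symm)
    (fun j => by
      have h := sum_mul_diagonal_mul_conjTranspose_apply W (fun _ => 1) j
      simp only [Complex.ofReal_one, diagonal_one, hWunital, Matrix.smul_apply, one_apply_eq,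
        smul_eq_mul, mul_one] at h
      exact_mod_cast h.symm)
    hρ.isHermitian.eigenvalues hρ.eigenvalues_nonneg
    (by
      have h := hρ.isHermitian.trace_eq_sum_eigenvalues
      rw [htr] at h
      exact Complex.ofReal_injective (by simpa using h.symm))
  simp only [← hr] at hmain
  rw [vnEntropy_eq_sum_negMulLog hρ.isHermitian, vnEntropy_eq_sum_negMulLog hσ, Real.logb,
    ← sub_div]
  exact div_le_div_of_nonneg_right hmain (Real.log_nonneg one_le_two)

/-- core of Lemma 2 / Theorem 1: let `U : B₁ ⊗ Q₁ → F ⊗ Q₂` be unitary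
and let `τ = |v⟩⟨v|` be the pure state on `S ⊗ B̄₁ ⊗ F ⊗ Q₂` obtained by applying
`id_S ⊗ U ⊗ id_{B̄₁}` to `|ψ⟩_{S Q₁} ⊗ |φ⁺⟩_{B₁ B̄₁}`, with `|ψ⟩` an arbitrary pure
state and `|φ⁺⟩` the maximally entangled state. Then
`H(S B̄₁ F)_τ − H(S)_τ ≥ log₂(dim B₁ / dim F)`. -/
theorem entropic_inequality_core (s b f q1 q2 : ℕ)
    (hs : 0 < s) (hb : 0 < b) (hf : 0 < f) (hq1 : 0 < q1) (hq2 : 0 < q2)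
    (U : Matrix (Fin f × Fin q2) (Fin b × Fin q1) ℂ)
    (hU1 : U * Uᴴ = 1) (hU2 : Uᴴ * U = 1)
    (ψ : Fin s × Fin q1 → ℂ) (hψ : star ψ ⬝ᵥ ψ = 1)
    (v : Fin s × Fin b × Fin f × Fin q2 → ℂ)
    (hv : ∀ x : Fin s × Fin b × Fin f × Fin q2,
      v x = ∑ q1' : Fin q1, ∑ b1 : Fin b,
        ψ (x.1, q1') * ((Real.sqrt b)⁻¹ : ℂ) * (if b1 = x.2.1 then 1 else 0) *
          U (x.2.2.1, x.2.2.2) (b1, q1'))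
    (τ : Matrix (Fin s × Fin b × Fin f × Fin q2) (Fin s × Fin b × Fin f × Fin q2) ℂ)
    (hτ : τ = Matrix.vecMulVec v (star v)) :
    vnEntropy (Matrix.of fun p q : Fin s × Fin b × Fin f =>
        ∑ x : Fin q2, τ (p.1, p.2.1, p.2.2, x) (q.1, q.2.1, q.2.2, x)) -
      vnEntropy (Matrix.of fun a a' : Fin s =>
        ∑ b1 : Fin b, ∑ x1 : Fin f, ∑ x2 : Fin q2,
          τ (a, b1, x1, x2) (a', b1, x1, x2)) ≥
      Real.logb 2 ((b : ℝ) / (f : ℝ)) := by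
  have hbC : (b : ℂ) ≠ 0 := by exact_mod_cast hb.ne'
  have hsq : ((√(b : ℝ) : ℂ))⁻¹ * ((√(b : ℝ) : ℂ))⁻¹ = (b : ℂ)⁻¹ := by
    rw [← mul_inv, ← Complex.ofReal_mul, Real.mul_self_sqrt (Nat.cast_nonneg b),
      Complex.ofReal_natCast]
  let M : Matrix (Fin s) (Fin q1) ℂ := Matrix.of fun a q => ψ (a, q)
  let L : Fin b × Fin f → Matrix (Fin q2) (Fin q1) ℂ := fun k =>
    Matrix.of fun x q => ((√(b : ℝ) : ℂ))⁻¹ * star (U (k.2, x) (k.1, q))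
  let V : Matrix (Fin s × Fin b × Fin f) (Fin q2) ℂ :=
    Matrix.of fun p x => v (p.1, p.2.1, p.2.2, x)
  let N : Fin b × Fin f → Matrix (Fin s) (Fin q2) ℂ := fun k => M * (L k)ᴴ
  have hV (a : Fin s) (k : Fin b × Fin f) (x : Fin q2) : V (a, k) x = N k a x := by
    simp [N, V, hv, M, L, Matrix.mul_apply, mul_assoc]
  have htp : ∑ k, (L k)ᴴ * L k = 1 := by
    ext q q'
    have h (β : Fin b) : ∑ φ, ∑ x, U (φ, x) (β, q) * star (U (φ, x) (β, q')) =
        (1 : Matrix (Fin q1) (Fin q1) ℂ) q q' := by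
      have := congrFun (congrFun hU2 (β, q')) (β, q)
      simp only [Matrix.mul_apply, conjTranspose_apply, Fintype.sum_prod_type] at this
      simp only [mul_comm (U _ _), this, one_apply, Prod.mk.injEq, true_and, eq_comm]
    calc (∑ k, (L k)ᴴ * L k) q q'
        = ∑ β : Fin b, (b : ℂ)⁻¹ * ∑ φ, ∑ x, U (φ, x) (β, q) * star (U (φ, x) (β, q')) := by
          simp only [Matrix.sum_apply, Matrix.mul_apply, conjTranspose_apply,
            Fintype.sum_prod_type, Finset.mul_sum, ← hsq]
          simp [L, mul_mul_mul_comm]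
      _ = _ := by simp only [h]; simp [hbC]
  have hunital : ∑ k, L k * (L k)ᴴ = (((f : ℝ) / b : ℝ) : ℂ) • 1 := by
    ext x x'
    have h (φ : Fin f) : ∑ β, ∑ q, star (U (φ, x) (β, q)) * U (φ, x') (β, q) =
        (1 : Matrix (Fin q2) (Fin q2) ℂ) x x' := by
      have := congrFun (congrFun hU1 (φ, x')) (φ, x)
      simp only [Matrix.mul_apply, conjTranspose_apply, Fintype.sum_prod_type] at this
      simp only [mul_comm (star _), this, one_apply, Prod.mk.injEq, true_and, eq_comm]
    calc (∑ k, L k * (L k)ᴴ) x x'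
        = ∑ φ : Fin f, (b : ℂ)⁻¹ * ∑ β, ∑ q, star (U (φ, x) (β, q)) * U (φ, x') (β, q) := by
          simp only [Matrix.sum_apply, Matrix.mul_apply, conjTranspose_apply,
            Fintype.sum_prod_type_right, Finset.mul_sum, ← hsq]
          simp [L, mul_mul_mul_comm]
      _ = _ := by simp only [h]; simp [div_eq_mul_inv, mul_assoc]
  have hVV : Vᴴ * V = ∑ k, L k * (Mᴴ * M) * (L k)ᴴ := by
    ext x x'
    have h (k : Fin b × Fin f) : L k * (Mᴴ * M) * (L k)ᴴ = (N k)ᴴ * N k := by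
      simp [N, Matrix.mul_assoc]
    simp only [h, Matrix.sum_apply, Matrix.mul_apply, conjTranspose_apply,
      Fintype.sum_prod_type_right , hV]
  have hSBF : (Matrix.of fun p q : Fin s × Fin b × Fin f =>
      ∑ x : Fin q2, τ (p.1, p.2.1, p.2.2, x) (q.1, q.2.1, q.2.2, x)) = V * Vᴴ := by
    ext p q
    simp [hτ, V, Matrix.mul_apply, vecMulVec_apply]
  have hS : (Matrix.of fun a a' : Fin s => ∑ b1 : Fin b, ∑ x1 : Fin f, ∑ x2 : Fin q2,
      τ (a, b1, x1, x2) (a', b1, x1, x2)) = M * Mᴴ := by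
    have h : M * Mᴴ = ∑ k, N k * (N k)ᴴ := by
      calc M * Mᴴ = M * (∑ k, (L k)ᴴ * L k) * Mᴴ := by rw [htp, Matrix.mul_one]
        _ = _ := by simp [N, Matrix.mul_sum, Matrix.sum_mul, Matrix.mul_assoc]
    ext a a'
    rw [h]
    simp only [Matrix.sum_apply, Matrix.mul_apply, conjTranspose_apply, ← hV, Fintype.sum_prod_type]
    simp [hτ, V, vecMulVec_apply]
  have htr : (Mᴴ * M).trace = 1 := by
    rw [← hψ]
    simp [Matrix.trace, Matrix.mul_apply, dotProduct, M, Fintype.sum_prod_type_right]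
  have hgain := vnEntropy_sub_logb_le_of_kraus L (c := (f : ℝ) / b) (by positivity) htp hunital
    (posSemidef_conjTranspose_mul_self M) htr
  rw [hSBF, hS, vnEntropy_mul_comm V Vᴴ (isHermitian_mul_conjTranspose_self V)
    (isHermitian_conjTranspose_mul_self V), vnEntropy_mul_comm M Mᴴ
    (isHermitian_mul_conjTranspose_self M) (isHermitian_conjTranspose_mul_self M), hVV,
    ← inv_div, Real.logb_inv]
  linarith
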